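/- For each n ≥ 1, there exists no provability predicate PR_T(x) of T such that N⁺A_{0,n} ⊆ PL(PR_T). -/

import Mathlib

namespace PLN

/-! ### Modal formulas and the logics N⁺A_{m,n} -/

/-- Formulas of modal propositional logic. -/
inductive MFml : Type
  | var : ℕ → MFml
  | bot : MFml
  | neg : MFml → MFml
  | and : MFml → MFml → MFml
  | or : MFml → MFml → MFml
  | imp : MFml → MFml → MFml
  | box : MFml → MFml
  deriving DecidableEq

/-- `boxIter n A` is `□ⁿ A`, where `□⁰ A = A` and `□^(k+1) A = □ (□ᵏ A)`. -/
def boxIter : ℕ → MFml → MFml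
  | 0, A => A
  | k + 1, A => .box (boxIter k A)

/-- Evaluation of a modal formula under a valuation of its "propositional atoms"
(propositional variables, and boxed formulas); used to define propositional tautologies
in the modal language. -/
def MFml.evalTC (v : MFml → Prop) : MFml → Prop
  | .bot => False
  | .neg A => ¬ A.evalTC v
  | .and A B => A.evalTC v ∧ B.evalTC v
  | .or A B => A.evalTC v ∨ B.evalTC v
  | .imp A B => A.evalTC v → B.evalTC v
  | A => v A

/-- Propositional tautologies in the modal language. -/
def MTaut (A : MFml) : Prop := ∀ v, A.evalTC v

/-- Provability in the logic `N⁺A_{m,n}`: the pure logic of necessitation `N`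
(propositional tautologies, modus ponens, necessitation) together with the axiom scheme
`□ⁿA → □ᵐA` and the rule `Ros□` (from `¬□A` infer `¬□□A`). -/
inductive NAProves (m n : ℕ) : MFml → Prop
  | taut {A} : MTaut A → NAProves m n A
  | acc (A) : NAProves m n (.imp (boxIter n A) (boxIter m A))
  | mp {A B} : NAProves m n (.imp A B) → NAProves m n A → NAProves m n B
  | nec {A} : NAProves m n A → NAProves m n (.box A)
  | ros {A} : NAProves m n (.neg (.box A)) → NAProves m n (.neg (.box (.box A)))

/-- `IsSub B A` : `B` is a subformula of `A`. -/
inductive IsSub : MFml → MFml → Prop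
  | refl (A) : IsSub A A
  | neg {B A} : IsSub B A → IsSub B (.neg A)
  | andL {B A C} : IsSub B A → IsSub B (.and A C)
  | andR {B A C} : IsSub B C → IsSub B (.and A C)
  | orL {B A C} : IsSub B A → IsSub B (.or A C)
  | orR {B A C} : IsSub B C → IsSub B (.or A C)
  | impL {B A C} : IsSub B A → IsSub B (.imp A C)
  | impR {B A C} : IsSub B C → IsSub B (.imp A C)
  | box {B A} : IsSub B A → IsSub B (.box A)

/-! ### N-frames and N-models -/

/-- An N-model on a set `W` of worlds: an N-frame (a binary relation `≺_B` on `W`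
for each modal formula `B`) together with a valuation of propositional variables. -/
structure NModel (W : Type) where
  rel : MFml → W → W → Prop
  val : W → ℕ → Prop

/-- The forcing relation of an N-model:
`x ⊩ □B` iff every `y` with `x ≺_B y` satisfies `y ⊩ B`. -/
def NModel.Forces {W : Type} (M : NModel W) : W → MFml → Prop
  | x, .var p => M.val x p
  | _, .bot => False
  | x, .neg A => ¬ NModel.Forces M x A
  | x, .and A B => NModel.Forces M x A ∧ NModel.Forces M x B
  | x, .or A B => NModel.Forces M x A ∨ NModel.Forces M x B
  | x, .imp A B => NModel.Forces M x A → NModel.Forces M x B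
  | x, .box A => ∀ y, M.rel A x y → NModel.Forces M y A

/-- The relations `≺_B^k` : `x ≺_B^0 y` iff `x = y`, and
`x ≺_B^(k+1) y` iff `∃ w, x ≺_{□ᵏB} w` and `w ≺_B^k y`. -/
def NModel.relIter {W : Type} (M : NModel W) (B : MFml) : ℕ → W → W → Prop
  | 0, x, y => x = y
  | k + 1, x, y => ∃ w, M.rel (boxIter k B) x w ∧ NModel.relIter M B k w y

/-- `(m,n)`-accessibility of (the frame of) an N-model. -/
def NModel.Accessible {W : Type} (M : NModel W) (m n : ℕ) : Prop :=
  ∀ (B : MFml) (x y : W), NModel.relIter M B m x y → NModel.relIter M B n x y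

/-! ### The language of first-order arithmetic -/

/-- Terms of the language of arithmetic, with de Bruijn variables. -/
inductive ATerm : Type
  | var : ℕ → ATerm
  | zero : ATerm
  | succ : ATerm → ATerm
  | add : ATerm → ATerm → ATerm
  | mul : ATerm → ATerm → ATerm
  deriving DecidableEq

/-- Formulas of the language of arithmetic (with `≤` primitive), de Bruijn variables. -/
inductive AFml : Type
  | eq : ATerm → ATerm → AFml
  | le : ATerm → ATerm → AFml
  | neg : AFml → AFml
  | and : AFml → AFml → AFml
  | or : AFml → AFml → AFml
  | imp : AFml → AFml → AFml
  | all : AFml → AFml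
  | ex : AFml → AFml
  deriving DecidableEq

/-- Lift (shift up by one) the variables `≥ c` of a term. -/
def ATerm.lift (c : ℕ) : ATerm → ATerm
  | .var n => .var (if n < c then n else n + 1)
  | .zero => .zero
  | .succ t => .succ (t.lift c)
  | .add t s => .add (t.lift c) (s.lift c)
  | .mul t s => .mul (t.lift c) (s.lift c)

/-- Simultaneous substitution in terms. -/
def ATerm.substAll (σ : ℕ → ATerm) : ATerm → ATerm
  | .var n => σ n
  | .zero => .zero
  | .succ t => .succ (t.substAll σ)
  | .add t s => .add (t.substAll σ) (s.substAll σ)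
  | .mul t s => .mul (t.substAll σ) (s.substAll σ)

/-- Pushing a substitution under a binder. -/
def liftSub (σ : ℕ → ATerm) : ℕ → ATerm
  | 0 => .var 0
  | n + 1 => (σ n).lift 0

/-- Lift (shift up by one) the free variables `≥ c` of a formula. -/
def AFml.lift (c : ℕ) : AFml → AFml
  | .eq t s => .eq (t.lift c) (s.lift c)
  | .le t s => .le (t.lift c) (s.lift c)
  | .neg φ => .neg (φ.lift c)
  | .and φ ψ => .and (φ.lift c) (ψ.lift c)
  | .or φ ψ => .or (φ.lift c) (ψ.lift c)
  | .imp φ ψ => .imp (φ.lift c) (ψ.lift c)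
  | .all φ => .all (φ.lift (c + 1))
  | .ex φ => .ex (φ.lift (c + 1))

/-- Simultaneous (capture-avoiding) substitution in formulas. -/
def AFml.substAll (σ : ℕ → ATerm) : AFml → AFml
  | .eq t s => .eq (t.substAll σ) (s.substAll σ)
  | .le t s => .le (t.substAll σ) (s.substAll σ)
  | .neg φ => .neg (φ.substAll σ)
  | .and φ ψ => .and (φ.substAll σ) (ψ.substAll σ)
  | .or φ ψ => .or (φ.substAll σ) (ψ.substAll σ)
  | .imp φ ψ => .imp (φ.substAll σ) (ψ.substAll σ)
  | .all φ => .all (φ.substAll (liftSub σ))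
  | .ex φ => .ex (φ.substAll (liftSub σ))

def subst0Env (t : ATerm) : ℕ → ATerm
  | 0 => t
  | n + 1 => .var n

def subst2Env (t s : ATerm) : ℕ → ATerm
  | 0 => t
  | 1 => s
  | n + 2 => .var n

/-- Substitute the term `t` for the free variable `0` (decrementing other variables). -/
def AFml.subst0 (φ : AFml) (t : ATerm) : AFml := φ.substAll (subst0Env t)

/-- Substitute the terms `t`, `s` for the free variables `0`, `1` simultaneously. -/
def AFml.subst2 (φ : AFml) (t s : ATerm) : AFml := φ.substAll (subst2Env t s)

/-- Substitute `S(var 0)` for `var 0`, leaving all other free variables unchanged. -/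
def succSubst (φ : AFml) : AFml :=
  φ.substAll fun n => if n = 0 then .succ (.var 0) else .var n

/-- All variables of a term are `< c`. -/
def ATerm.FreeLt (c : ℕ) : ATerm → Prop
  | .var n => n < c
  | .zero => True
  | .succ t => t.FreeLt c
  | .add t s => t.FreeLt c ∧ s.FreeLt c
  | .mul t s => t.FreeLt c ∧ s.FreeLt c

/-- All free variables of a formula are `< c`; `FreeLt 0 φ` says that `φ` is a sentence. -/
def AFml.FreeLt (c : ℕ) : AFml → Prop
  | .eq t s => t.FreeLt c ∧ s.FreeLt c
  | .le t s => t.FreeLt c ∧ s.FreeLt c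
  | .neg φ => φ.FreeLt c
  | .and φ ψ => φ.FreeLt c ∧ ψ.FreeLt c
  | .or φ ψ => φ.FreeLt c ∧ ψ.FreeLt c
  | .imp φ ψ => φ.FreeLt c ∧ ψ.FreeLt c
  | .all φ => φ.FreeLt (c + 1)
  | .ex φ => φ.FreeLt (c + 1)

/-- The numeral `n̄`. -/
def numeral : ℕ → ATerm
  | 0 => .zero
  | n + 1 => .succ (numeral n)

/-- A Gödel numbering of terms. -/
def ATerm.code : ATerm → ℕ
  | .var n => Nat.pair 0 n
  | .zero => Nat.pair 1 0
  | .succ t => Nat.pair 2 t.code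
  | .add t s => Nat.pair 3 (Nat.pair t.code s.code)
  | .mul t s => Nat.pair 4 (Nat.pair t.code s.code)

/-- A Gödel numbering of formulas. -/
def AFml.code : AFml → ℕ
  | .eq t s => Nat.pair 0 (Nat.pair t.code s.code)
  | .le t s => Nat.pair 1 (Nat.pair t.code s.code)
  | .neg φ => Nat.pair 2 φ.code
  | .and φ ψ => Nat.pair 3 (Nat.pair φ.code ψ.code)
  | .or φ ψ => Nat.pair 4 (Nat.pair φ.code ψ.code)
  | .imp φ ψ => Nat.pair 5 (Nat.pair φ.code ψ.code)
  | .all φ => Nat.pair 6 φ.code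
  | .ex φ => Nat.pair 7 φ.code

/-- `⌜φ⌝`, the numeral of the Gödel number of `φ`. -/
def gnum (φ : AFml) : ATerm := numeral φ.code

/-- For a formula `P(x)` (with free variable `var 0`), `P.appNum φ` is `P(⌜φ⌝)`. -/
def AFml.appNum (P φ : AFml) : AFml := P.subst0 (gnum φ)

/-- Iterated application of a predicate: `iterPred P k φ = P(⌜P(⌜⋯P(⌜φ⌝)⋯⌝)⌝)` (`k` times). -/
def iterPred (P : AFml) : ℕ → AFml → AFml
  | 0, φ => φ
  | k + 1, φ => P.appNum (iterPred P k φ)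

/-! ### Satisfaction in the standard model -/

def ATerm.val (ρ : ℕ → ℕ) : ATerm → ℕ
  | .var n => ρ n
  | .zero => 0
  | .succ t => t.val ρ + 1
  | .add t s => t.val ρ + s.val ρ
  | .mul t s => t.val ρ * s.val ρ

def consEnv (a : ℕ) (ρ : ℕ → ℕ) : ℕ → ℕ
  | 0 => a
  | n + 1 => ρ n

/-- Satisfaction in the standard model `ℕ` under an environment `ρ`. -/
def AFml.Sat (ρ : ℕ → ℕ) : AFml → Prop
  | .eq t s => t.val ρ = s.val ρ
  | .le t s => t.val ρ ≤ s.val ρ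
  | .neg φ => ¬ φ.Sat ρ
  | .and φ ψ => φ.Sat ρ ∧ ψ.Sat ρ
  | .or φ ψ => φ.Sat ρ ∨ ψ.Sat ρ
  | .imp φ ψ => φ.Sat ρ → ψ.Sat ρ
  | .all φ => ∀ a, φ.Sat (consEnv a ρ)
  | .ex φ => ∃ a, φ.Sat (consEnv a ρ)

/-- `ℕ ⊨ φ`. -/
def TrueN (φ : AFml) : Prop := φ.Sat fun _ => 0

/-! ### The arithmetical hierarchy: Δ₀, Σ₁, Π₁ -/

/-- `Δ₀` formulas: every quantifier is bounded. -/
inductive IsDelta0 : AFml → Prop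
  | eq (t s : ATerm) : IsDelta0 (.eq t s)
  | le (t s : ATerm) : IsDelta0 (.le t s)
  | neg {φ} : IsDelta0 φ → IsDelta0 (.neg φ)
  | and {φ ψ} : IsDelta0 φ → IsDelta0 ψ → IsDelta0 (.and φ ψ)
  | or {φ ψ} : IsDelta0 φ → IsDelta0 ψ → IsDelta0 (.or φ ψ)
  | imp {φ ψ} : IsDelta0 φ → IsDelta0 ψ → IsDelta0 (.imp φ ψ)
  | ball {φ : AFml} (t : ATerm) : IsDelta0 φ → IsDelta0 (.all (.imp (.le (.var 0) (ATerm.lift 0 t)) φ))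
  | bex {φ : AFml} (t : ATerm) : IsDelta0 φ → IsDelta0 (.ex (.and (.le (.var 0) (ATerm.lift 0 t)) φ))

mutual
  /-- `Σ₁` formulas. -/
  inductive IsSigma1 : AFml → Prop
    | delta0 {φ} : IsDelta0 φ → IsSigma1 φ
    | and {φ ψ} : IsSigma1 φ → IsSigma1 ψ → IsSigma1 (.and φ ψ)
    | or {φ ψ} : IsSigma1 φ → IsSigma1 ψ → IsSigma1 (.or φ ψ)
    | ex {φ} : IsSigma1 φ → IsSigma1 (.ex φ)
    | negPi {φ} : IsPi1 φ → IsSigma1 (.neg φ)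
    | impPiSigma {φ ψ} : IsPi1 φ → IsSigma1 ψ → IsSigma1 (.imp φ ψ)
  /-- `Π₁` formulas. -/
  inductive IsPi1 : AFml → Prop
    | delta0 {φ} : IsDelta0 φ → IsPi1 φ
    | and {φ ψ} : IsPi1 φ → IsPi1 ψ → IsPi1 (.and φ ψ)
    | or {φ ψ} : IsPi1 φ → IsPi1 ψ → IsPi1 (.or φ ψ)
    | all {φ} : IsPi1 φ → IsPi1 (.all φ)
    | negSigma {φ} : IsSigma1 φ → IsPi1 (.neg φ)
    | impSigmaPi {φ ψ} : IsSigma1 φ → IsPi1 ψ → IsPi1 (.imp φ ψ)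
end

/-! ### A Hilbert-style proof system for first-order arithmetic -/

/-- Evaluation of an arithmetical formula under a valuation of its "propositionally atomic"
subformulas (atomic or quantified formulas); used for propositional tautologies and
tautological consequence. -/
def AFml.evalProp (v : AFml → Prop) : AFml → Prop
  | .neg φ => ¬ φ.evalProp v
  | .and φ ψ => φ.evalProp v ∧ ψ.evalProp v
  | .or φ ψ => φ.evalProp v ∨ ψ.evalProp v
  | .imp φ ψ => φ.evalProp v → ψ.evalProp v
  | φ => v φ

/-- Propositional tautologies in the language of arithmetic. -/
def ATaut (φ : AFml) : Prop := ∀ v, φ.evalProp v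

/-- `φ` is a tautological consequence of the set `X` of formulas. -/
def TC (X : Set AFml) (φ : AFml) : Prop :=
  ∀ v : AFml → Prop, (∀ ψ ∈ X, ψ.evalProp v) → φ.evalProp v

def iffF (φ ψ : AFml) : AFml := .and (.imp φ ψ) (.imp ψ φ)

/-- Hilbert-style provability from the set of axioms `Γ` in classical first-order
logic with equality. -/
inductive Proves (Γ : Set AFml) : AFml → Prop
  | ax {φ} : φ ∈ Γ → Proves Γ φ
  | taut {φ} : ATaut φ → Proves Γ φ
  | mp {φ ψ} : Proves Γ (.imp φ ψ) → Proves Γ φ → Proves Γ ψ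
  | allE (φ : AFml) (t : ATerm) : Proves Γ (.imp (.all φ) (φ.subst0 t))
  | exI (φ : AFml) (t : ATerm) : Proves Γ (.imp (φ.subst0 t) (.ex φ))
  | allImp (φ ψ : AFml) : Proves Γ (.imp (.all (.imp φ ψ)) (.imp (.all φ) (.all ψ)))
  | vacAll (φ : AFml) : Proves Γ (.imp φ (.all (AFml.lift 0 φ)))
  | exDef (φ : AFml) : Proves Γ (iffF (.ex φ) (.neg (.all (.neg φ))))
  | gen {φ} : Proves Γ φ → Proves Γ (.all φ)
  | eqRefl (t : ATerm) : Proves Γ (.eq t t)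
  | eqSubst (φ : AFml) (t s : ATerm) : Proves Γ (.imp (.eq t s) (.imp (φ.subst0 t) (φ.subst0 s)))

/-! ### Peano arithmetic -/

/-- The axioms of Peano arithmetic. -/
inductive PAax : AFml → Prop
  | succNeZero : PAax (.all (.neg (.eq (.succ (.var 0)) .zero)))
  | succInj :
      PAax (.all (.all (.imp (.eq (.succ (.var 1)) (.succ (.var 0))) (.eq (.var 1) (.var 0)))))
  | addZero : PAax (.all (.eq (.add (.var 0) .zero) (.var 0)))
  | addSucc :
      PAax (.all (.all (.eq (.add (.var 1) (.succ (.var 0))) (.succ (.add (.var 1) (.var 0))))))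
  | mulZero : PAax (.all (.eq (.mul (.var 0) .zero) .zero))
  | mulSucc :
      PAax (.all (.all (.eq (.mul (.var 1) (.succ (.var 0)))
        (.add (.mul (.var 1) (.var 0)) (.var 1)))))
  | leDef :
      PAax (.all (.all (iffF (.le (.var 1) (.var 0))
        (.ex (.eq (.add (.var 0) (.var 2)) (.var 1))))))
  | ind (φ : AFml) :
      PAax (.imp (.and (φ.subst0 .zero) (.all (.imp φ (succSubst φ)))) (.all φ))

/-- Peano arithmetic, as a set of axioms. -/
def PA : Set AFml := {φ | PAax φ}

/-- The sentence `0 = 1`. -/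
def botFml : AFml := .eq .zero (.succ .zero)

/-- `t < s`, as the formula `S(t) ≤ s`. -/
def ltF (t s : ATerm) : AFml := .le (.succ t) s

/-- `Δ₁(PA)` formulas: `Σ₁` formulas which are `PA`-provably equivalent to a `Π₁` formula. -/
def IsDelta1PA (φ : AFml) : Prop :=
  IsSigma1 φ ∧ ∃ ψ, IsPi1 ψ ∧ Proves PA (iffF φ ψ)

/-! ### Theories, provability predicates, arithmetical interpretations -/

/-- `Tax` is primitive recursively axiomatized (via the Gödel numbering). -/
def PrAxiomatized (Tax : Set AFml) : Prop :=
  ∃ p : ℕ → Bool, Primrec p ∧ ∀ φ : AFml, φ ∈ Tax ↔ p φ.code = true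

/-- `Σ₁`-soundness: every `T`-provable `Σ₁` sentence is true in `ℕ`. -/
def Sigma1Sound (Tax : Set AFml) : Prop :=
  ∀ φ : AFml, IsSigma1 φ → φ.FreeLt 0 → Proves Tax φ → TrueN φ

/-- `P` is a provability predicate of `T`: a formula `P(x)` with at most the free
variable `x` such that for every formula `φ`, `T ⊢ φ` iff `PA ⊢ P(⌜φ⌝)`. -/
def IsProvPred (Tax : Set AFml) (P : AFml) : Prop :=
  P.FreeLt 1 ∧ ∀ φ : AFml, Proves Tax φ ↔ Proves PA (P.appNum φ)

/-- `f` is an arithmetical interpretation based on the predicate `P`. -/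
def IsInterp (P : AFml) (f : MFml → AFml) : Prop :=
  (∀ i, (f (.var i)).FreeLt 0) ∧
  f .bot = botFml ∧
  (∀ A, f (.neg A) = .neg (f A)) ∧
  (∀ A B, f (.and A B) = .and (f A) (f B)) ∧
  (∀ A B, f (.or A B) = .or (f A) (f B)) ∧
  (∀ A B, f (.imp A B) = .imp (f A) (f B)) ∧
  (∀ A, f (.box A) = P.appNum (f A))

/-- The provability logic of the predicate `P` (relative to the theory `Tax`). -/
def PL (Tax : Set AFml) (P : AFml) : Set MFml :=
  {A | ∀ f : MFml → AFml, IsInterp P f → Proves Tax (f A)}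

/-- The formulas with a `T`-proof of code `≤ s` (relative to a proof enumeration `prf`). -/
def PTset (prf : ℕ → Option AFml) (s : ℕ) : Set AFml :=
  {φ | ∃ y ≤ s, prf y = some φ}

/-!
Let `σ` be a fixed point of not being `n`-fold provable: PA proves `σ ↔ ¬ Pⁿ(σ)`. If `T` proves the
reflection instance `Pⁿ(σ) → σ`, then `T` proves `σ` by propositional logic, hence `Pⁿ(σ)` by `n`
necessitations, while the fixed point equation gives `¬ Pⁿ(σ)`: `T` is inconsistent.

The diagonal lemma needs PA to represent the primitive recursive function `⌜φ⌝ ↦ ⌜Pⁿ⁻¹(φ)⌝`. A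
primitive recursive function has a Δ₀ graph relative to a bound for the codes of its computations,
and PA decides Δ₀ sentences. Adding, in the manner of Rosser, that no bound up to the given one
yields another value makes the value provably unique.
-/

/-! ### Substitution -/

/-- The substitution that shifts the variables `≥ c` up by one. -/
def shiftEnv (c : ℕ) : ℕ → ATerm := fun n => .var (if n < c then n else n + 1)

attribute [simp] ATerm.substAll ATerm.lift AFml.substAll AFml.lift

@[simp] theorem liftSub_zero (σ : ℕ → ATerm) : liftSub σ 0 = .var 0 := rfl

@[simp] theorem liftSub_succ (σ : ℕ → ATerm) (i : ℕ) : liftSub σ (i + 1) = (σ i).lift 0 := rfl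

@[simp] theorem subst0Env_zero (t : ATerm) : subst0Env t 0 = t := rfl

@[simp] theorem subst0Env_succ (t : ATerm) (i : ℕ) : subst0Env t (i + 1) = .var i := rfl

@[simp] theorem consEnv_zero (a : ℕ) (ρ : ℕ → ℕ) : consEnv a ρ 0 = a := rfl

@[simp] theorem consEnv_succ (a : ℕ) (ρ : ℕ → ℕ) (i : ℕ) : consEnv a ρ (i + 1) = ρ i := rfl

namespace ATerm

theorem lift_eq_substAll (c : ℕ) (t : ATerm) : t.lift c = t.substAll (shiftEnv c) := by
  induction t <;> simp_all [shiftEnv]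

@[simp] theorem substAll_substAll (σ τ : ℕ → ATerm) (t : ATerm) :
    (t.substAll σ).substAll τ = t.substAll fun i => (σ i).substAll τ := by
  induction t <;> simp_all

theorem substAll_congr {c : ℕ} {σ τ : ℕ → ATerm} {t : ATerm} (ht : t.FreeLt c)
    (h : ∀ i < c, σ i = τ i) : t.substAll σ = t.substAll τ := by
  induction t <;> simp_all [FreeLt]

@[simp] theorem substAll_var (t : ATerm) : t.substAll .var = t := by
  induction t <;> simp_all

@[simp] theorem lift_substAll_liftSub (τ : ℕ → ATerm) (t : ATerm) :
    (t.lift 0).substAll (liftSub τ) = (t.substAll τ).lift 0 := by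
  simp [lift_eq_substAll, shiftEnv]

@[simp] theorem lift_substAll_subst0Env (s t : ATerm) :
    (t.lift 0).substAll (subst0Env s) = t := by
  simp [lift_eq_substAll, shiftEnv]

theorem FreeLt.lift {c : ℕ} {t : ATerm} (ht : t.FreeLt c) : (t.lift 0).FreeLt (c + 1) := by
  induction t <;> simp_all [FreeLt]

theorem freeLt_substAll {c : ℕ} {σ : ℕ → ATerm} (hσ : ∀ i, (σ i).FreeLt c) (t : ATerm) :
    (t.substAll σ).FreeLt c := by
  induction t <;> simp_all [FreeLt]

@[simp] theorem val_substAll (σ : ℕ → ATerm) (ρ : ℕ → ℕ) (t : ATerm) :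
    (t.substAll σ).val ρ = t.val fun i => (σ i).val ρ := by
  induction t <;> simp_all [val]

@[simp] theorem val_lift (a : ℕ) (ρ : ℕ → ℕ) (t : ATerm) :
    (t.lift 0).val (consEnv a ρ) = t.val ρ := by
  simp [lift_eq_substAll, shiftEnv, val]

end ATerm

theorem liftSub_comp (σ τ : ℕ → ATerm) :
    (fun i => (liftSub σ i).substAll (liftSub τ)) = liftSub fun i => (σ i).substAll τ := by
  funext i
  cases i <;> simp

@[simp] theorem liftSub_var : liftSub .var = .var := by
  funext i
  cases i <;> simp

theorem liftSub_shiftEnv (c : ℕ) : liftSub (shiftEnv c) = shiftEnv (c + 1) := by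
  funext i
  cases i with
  | zero => simp [shiftEnv]
  | succ i => by_cases h : i < c <;> simp [shiftEnv, h]

theorem liftSub_congr {c : ℕ} {σ τ : ℕ → ATerm} (h : ∀ i < c, σ i = τ i) :
    ∀ i < c + 1, liftSub σ i = liftSub τ i
  | 0, _ => rfl
  | i + 1, hi => congrArg (ATerm.lift 0) (h i (Nat.lt_of_succ_lt_succ hi))

theorem liftSub_freeLt {c : ℕ} {σ : ℕ → ATerm} (h : ∀ i, (σ i).FreeLt c) :
    ∀ i, (liftSub σ i).FreeLt (c + 1)
  | 0 => Nat.succ_pos c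
  | i + 1 => (h i).lift

theorem val_liftSub (σ : ℕ → ATerm) (ρ : ℕ → ℕ) (a : ℕ) :
    (fun i => (liftSub σ i).val (consEnv a ρ)) = consEnv a fun i => (σ i).val ρ := by
  funext i
  cases i <;> simp [ATerm.val]

namespace AFml

theorem lift_eq_substAll (c : ℕ) (φ : AFml) : φ.lift c = φ.substAll (shiftEnv c) := by
  induction φ generalizing c <;> simp_all [ATerm.lift_eq_substAll, liftSub_shiftEnv]

@[simp] theorem substAll_substAll (σ τ : ℕ → ATerm) (φ : AFml) :
    (φ.substAll σ).substAll τ = φ.substAll fun i => (σ i).substAll τ := by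
  induction φ generalizing σ τ <;> simp_all [liftSub_comp]

theorem substAll_congr {c : ℕ} {σ τ : ℕ → ATerm} {φ : AFml} (hφ : φ.FreeLt c)
    (h : ∀ i < c, σ i = τ i) : φ.substAll σ = φ.substAll τ := by
  induction φ generalizing c σ τ with
  | eq t s | le t s => simp [ATerm.substAll_congr hφ.1 h, ATerm.substAll_congr hφ.2 h]
  | neg φ ih => simp [ih hφ h]
  | and φ ψ ihφ ihψ | or φ ψ ihφ ihψ | imp φ ψ ihφ ihψ => simp [ihφ hφ.1 h, ihψ hφ.2 h]
  | all φ ih | ex φ ih => simp [ih hφ (liftSub_congr h)]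

@[simp] theorem substAll_var (φ : AFml) : φ.substAll .var = φ := by
  induction φ <;> simp_all

theorem FreeLt.substAll_eq_self {c : ℕ} {σ : ℕ → ATerm} {φ : AFml} (hφ : φ.FreeLt c)
    (hσ : ∀ i < c, σ i = .var i) : φ.substAll σ = φ :=
  (substAll_congr hφ hσ).trans φ.substAll_var

theorem freeLt_substAll {c : ℕ} {σ : ℕ → ATerm} (hσ : ∀ i, (σ i).FreeLt c) (φ : AFml) :
    (φ.substAll σ).FreeLt c := by
  induction φ generalizing c σ with
  | eq t s | le t s => exact ⟨t.freeLt_substAll hσ, s.freeLt_substAll hσ⟩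
  | neg _ ih => exact ih hσ
  | and _ _ ihφ ihψ | or _ _ ihφ ihψ | imp _ _ ihφ ihψ => exact ⟨ihφ hσ, ihψ hσ⟩
  | all _ ih | ex _ ih => exact ih (liftSub_freeLt hσ)

theorem FreeLt.substAll {c d : ℕ} {σ : ℕ → ATerm} {φ : AFml} (hφ : φ.FreeLt c)
    (hσ : ∀ i < c, (σ i).FreeLt d) : (φ.substAll σ).FreeLt d := by
  rw [substAll_congr (τ := fun i => if i < c then σ i else .zero) hφ fun i hi => by simp [hi]]
  refine freeLt_substAll (fun i => ?_) φ
  split_ifs with hi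
  exacts [hσ i hi, trivial]

theorem FreeLt.mono {c d : ℕ} {φ : AFml} (hφ : φ.FreeLt c) (hcd : c ≤ d) : φ.FreeLt d := by
  rw [← φ.substAll_var]
  exact hφ.substAll fun i hi => hi.trans_le hcd

theorem lift_one_subst0_lift (φ : AFml) (t : ATerm) :
    (φ.lift 1).subst0 (t.lift 0) = (φ.subst0 t).lift 0 := by
  simp only [lift_eq_substAll, subst0, substAll_substAll]
  congr 1
  funext i
  cases i <;> simp [shiftEnv, ATerm.lift_eq_substAll]

theorem lift_one_subst0_var_zero (φ : AFml) : (φ.lift 1).subst0 (.var 0) = φ := by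
  simp only [lift_eq_substAll, subst0, substAll_substAll]
  conv_rhs => rw [← φ.substAll_var]
  congr 1
  funext i
  cases i <;> simp [shiftEnv]

theorem lift_one_substAll_liftSub_subst0Env (φ : AFml) (t : ATerm) :
    (φ.lift 1).substAll (liftSub (subst0Env t)) = φ := by
  simp only [lift_eq_substAll, substAll_substAll]
  conv_rhs => rw [← φ.substAll_var]
  congr 1
  funext i
  cases i <;> simp [shiftEnv]

theorem sat_substAll (σ : ℕ → ATerm) (ρ : ℕ → ℕ) (φ : AFml) :
    (φ.substAll σ).Sat ρ ↔ φ.Sat fun i => (σ i).val ρ := by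
  induction φ generalizing σ ρ <;> simp_all [Sat, val_liftSub]

end AFml

theorem IsDelta0.substAll {φ : AFml} (h : IsDelta0 φ) (σ : ℕ → ATerm) :
    IsDelta0 (φ.substAll σ) := by
  induction h generalizing σ with
  | eq t s => exact .eq _ _
  | le t s => exact .le _ _
  | neg _ ih => exact .neg (ih σ)
  | and _ _ ihφ ihψ => exact .and (ihφ σ) (ihψ σ)
  | or _ _ ihφ ihψ => exact .or (ihφ σ) (ihψ σ)
  | imp _ _ ihφ ihψ => exact .imp (ihφ σ) (ihψ σ)
  | ball t _ ih => simpa using .ball _ (ih _)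
  | bex t _ ih => simpa using .bex _ (ih _)

section numeral

variable (n : ℕ)

@[simp] theorem numeral_substAll (σ : ℕ → ATerm) : (numeral n).substAll σ = numeral n := by
  induction n <;> simp_all [numeral]

@[simp] theorem numeral_lift (c : ℕ) : (numeral n).lift c = numeral n := by
  simp [ATerm.lift_eq_substAll]

theorem numeral_freeLt (c : ℕ) : (numeral n).FreeLt c := by
  induction n <;> simp_all [numeral, ATerm.FreeLt]

@[simp] theorem numeral_val (ρ : ℕ → ℕ) : (numeral n).val ρ = n := by
  induction n <;> simp_all [numeral, ATerm.val]

theorem succSubst_subst0_numeral (φ : AFml) :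
    (succSubst φ).subst0 (numeral n) = φ.subst0 (numeral (n + 1)) := by
  simp only [succSubst, AFml.subst0, AFml.substAll_substAll]
  congr 1
  funext i
  cases i <;> simp [numeral]

end numeral

theorem subst0_substAll_liftSub_numeral (φ : AFml) (ρ : ℕ → ℕ) (a : ℕ) :
    (φ.substAll (liftSub fun i => numeral (ρ i))).subst0 (numeral a) =
      φ.substAll fun i => numeral (consEnv a ρ i) := by
  simp only [AFml.subst0, AFml.substAll_substAll]
  congr 1
  funext i
  cases i <;> simp

theorem AFml.FreeLt.subst0_numeral {φ : AFml} {c : ℕ} (hφ : φ.FreeLt (c + 1)) (n : ℕ) :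
    (φ.subst0 (numeral n)).FreeLt c :=
  hφ.substAll fun
    | 0, _ => numeral_freeLt n c
    | _ + 1, hi => Nat.lt_of_succ_lt_succ hi

/-- The substitution of three terms for the variables `0`, `1`, `2`; it sends the other variables
to `0`, so that the result has no further free variables. -/
def subst3Env (t s u : ATerm) : ℕ → ATerm
  | 0 => t
  | 1 => s
  | 2 => u
  | _ + 3 => .zero

/-- The formula `φ(t, s, u)`, for `φ` with the free variables `0`, `1`, `2`. -/
def AFml.subst3 (φ : AFml) (t s u : ATerm) : AFml := φ.substAll (subst3Env t s u)

@[simp] theorem AFml.subst3_substAll (φ : AFml) (t s u : ATerm) (σ : ℕ → ATerm) :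
    (φ.subst3 t s u).substAll σ = φ.subst3 (t.substAll σ) (s.substAll σ) (u.substAll σ) := by
  rw [subst3, subst3, substAll_substAll]
  congr 1
  funext i
  rcases i with _ | _ | _ | i <;> rfl

theorem AFml.freeLt_subst3 (φ : AFml) {t s u : ATerm} {c : ℕ} (ht : t.FreeLt c) (hs : s.FreeLt c)
    (hu : u.FreeLt c) : (φ.subst3 t s u).FreeLt c :=
  freeLt_substAll (σ := subst3Env t s u) (fun
    | 0 => ht
    | 1 => hs
    | 2 => hu
    | _ + 3 => trivial) φ

/-! ### Primitive recursive functions have Δ₀ graphs -/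

/-- Functions of an assignment of the variables that are the value of a term. -/
def IsTermFun (f : (ℕ → ℕ) → ℕ) : Prop := ∃ t : ATerm, ∀ ρ, t.val ρ = f ρ

/-- Relations on assignments of the variables that are defined by a Δ₀ formula. -/
def IsDelta0Rel (R : (ℕ → ℕ) → Prop) : Prop := ∃ φ, IsDelta0 φ ∧ ∀ ρ, φ.Sat ρ ↔ R ρ

namespace IsTermFun

variable {f g : (ℕ → ℕ) → ℕ}

theorem var (i : ℕ) : IsTermFun fun ρ => ρ i := ⟨.var i, fun _ => rfl⟩

theorem const (n : ℕ) : IsTermFun fun _ => n := ⟨numeral n, numeral_val n⟩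

theorem add (hf : IsTermFun f) (hg : IsTermFun g) : IsTermFun fun ρ => f ρ + g ρ :=
  let ⟨t, ht⟩ := hf
  let ⟨s, hs⟩ := hg
  ⟨.add t s, fun ρ => congrArg₂ (· + ·) (ht ρ) (hs ρ)⟩

theorem mul (hf : IsTermFun f) (hg : IsTermFun g) : IsTermFun fun ρ => f ρ * g ρ :=
  let ⟨t, ht⟩ := hf
  let ⟨s, hs⟩ := hg
  ⟨.mul t s, fun ρ => congrArg₂ (· * ·) (ht ρ) (hs ρ)⟩

theorem shift (hf : IsTermFun f) : IsTermFun fun ρ => f fun i => ρ (i + 1) :=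
  let ⟨t, ht⟩ := hf
  ⟨t.substAll fun i => .var (i + 1), fun ρ => by rw [ATerm.val_substAll, ht]; rfl⟩

end IsTermFun

namespace IsDelta0Rel

variable {f g h : (ℕ → ℕ) → ℕ} {R S : (ℕ → ℕ) → Prop}

theorem of_iff (hR : IsDelta0Rel R) (h : ∀ ρ, S ρ ↔ R ρ) : IsDelta0Rel S :=
  (funext fun ρ => propext (h ρ) : S = R) ▸ hR

theorem eq (hf : IsTermFun f) (hg : IsTermFun g) : IsDelta0Rel fun ρ => f ρ = g ρ :=
  let ⟨t, ht⟩ := hf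
  let ⟨s, hs⟩ := hg
  ⟨.eq t s, .eq t s, fun ρ => by simp only [AFml.Sat, ht, hs]⟩

theorem le (hf : IsTermFun f) (hg : IsTermFun g) : IsDelta0Rel fun ρ => f ρ ≤ g ρ :=
  let ⟨t, ht⟩ := hf
  let ⟨s, hs⟩ := hg
  ⟨.le t s, .le t s, fun ρ => by simp only [AFml.Sat, ht, hs]⟩

theorem lt (hf : IsTermFun f) (hg : IsTermFun g) : IsDelta0Rel fun ρ => f ρ < g ρ :=
  le (hf.add (.const 1)) hg

theorem and (hR : IsDelta0Rel R) (hS : IsDelta0Rel S) : IsDelta0Rel fun ρ => R ρ ∧ S ρ :=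
  let ⟨φ, hφ, hφR⟩ := hR
  let ⟨ψ, hψ, hψS⟩ := hS
  ⟨.and φ ψ, .and hφ hψ, fun ρ => and_congr (hφR ρ) (hψS ρ)⟩

theorem or (hR : IsDelta0Rel R) (hS : IsDelta0Rel S) : IsDelta0Rel fun ρ => R ρ ∨ S ρ :=
  let ⟨φ, hφ, hφR⟩ := hR
  let ⟨ψ, hψ, hψS⟩ := hS
  ⟨.or φ ψ, .or hφ hψ, fun ρ => or_congr (hφR ρ) (hψS ρ)⟩

theorem exists_le {R : ℕ → (ℕ → ℕ) → Prop} (hf : IsTermFun f)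
    (hR : IsDelta0Rel fun ρ => R (ρ 0) fun i => ρ (i + 1)) :
    IsDelta0Rel fun ρ => ∃ a ≤ f ρ, R a ρ :=
  let ⟨t, ht⟩ := hf
  let ⟨_, hφ, hφR⟩ := hR
  ⟨_, .bex t hφ, fun ρ => exists_congr fun a =>
    and_congr (by rw [AFml.Sat, ATerm.val_lift, ht]; rfl) (hφR _)⟩

theorem forall_le {R : ℕ → (ℕ → ℕ) → Prop} (hf : IsTermFun f)
    (hR : IsDelta0Rel fun ρ => R (ρ 0) fun i => ρ (i + 1)) :
    IsDelta0Rel fun ρ => ∀ a ≤ f ρ, R a ρ :=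
  let ⟨t, ht⟩ := hf
  let ⟨_, hφ, hφR⟩ := hR
  ⟨_, .ball t hφ, fun ρ => forall_congr' fun a =>
    imp_congr (by rw [AFml.Sat, ATerm.val_lift, ht]; rfl) (hφR _)⟩

theorem forall_lt {R : ℕ → (ℕ → ℕ) → Prop} (hf : IsTermFun f)
    (hR : IsDelta0Rel fun ρ => R (ρ 0) fun i => ρ (i + 1)) :
    IsDelta0Rel fun ρ => ∀ a < f ρ, R a ρ :=
  (forall_le (R := fun a ρ => f ρ ≤ a ∨ R a ρ) hf ((le hf.shift (.var 0)).or hR)).of_iff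
    fun _ => forall_congr' fun a => by grind

theorem eq_pair (hf : IsTermFun f) (hg : IsTermFun g) (hh : IsTermFun h) :
    IsDelta0Rel fun ρ => h ρ = Nat.pair (f ρ) (g ρ) :=
  (((lt hf hg).and (eq hh ((hg.mul hg).add hf))).or
    ((le hg hf).and (eq hh (((hf.mul hf).add hf).add hg)))).of_iff fun ρ => by
      rw [Nat.pair]
      split_ifs <;> grind

theorem eq_mod (hf : IsTermFun f) (hg : IsTermFun g) (hh : IsTermFun h) :
    IsDelta0Rel fun ρ => h ρ = f ρ % g ρ := by
  refine (((eq hg (.const 0)).or (lt hh hg)).and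
    (exists_le (R := fun d ρ => f ρ = h ρ + g ρ * d) hf
      (eq hf.shift (hh.shift.add (hg.shift.mul (.var 0)))))).of_iff fun ρ => ⟨fun hρ => ?_, ?_⟩
  · rw [hρ]
    exact ⟨(Nat.eq_zero_or_pos _).imp_right (Nat.mod_lt _), f ρ / g ρ, Nat.div_le_self _ _,
      (Nat.mod_add_div _ _).symm⟩
  · rintro ⟨hg | hlt, d, -, hd⟩
    · simp [hd, hg]
    · rw [hd, Nat.add_mul_mod_self_left, Nat.mod_eq_of_lt hlt]

theorem eq_beta (hf : IsTermFun f) (hg : IsTermFun g) (hh : IsTermFun h) :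
    IsDelta0Rel fun ρ => h ρ = Nat.beta (f ρ) (g ρ) := by
  refine (exists_le (R := fun p ρ => ∃ q ≤ f ρ, f ρ = Nat.pair p q ∧
      h ρ = p % ((g ρ + 1) * q + 1)) hf <|
    exists_le (R := fun q ρ => f (fun i => ρ (i + 1)) = Nat.pair (ρ 0) q ∧
      h (fun i => ρ (i + 1)) = ρ 0 % ((g (fun i => ρ (i + 1)) + 1) * q + 1)) hf.shift <|
    (eq_pair (.var 1) (.var 0) hf.shift.shift).and <| eq_mod (.var 1)
      (((hg.shift.shift.add (.const 1)).mul (.var 0)).add (.const 1)) hh.shift.shift).of_iff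
    fun ρ => ⟨fun hρ => ?_, ?_⟩
  · exact ⟨_, Nat.unpair_left_le _, _, Nat.unpair_right_le _, (Nat.pair_unpair _).symm, hρ⟩
  · rintro ⟨p, -, q, -, hpq, hρ⟩
    rwa [Nat.beta, hpq, Nat.unpair_pair]

end IsDelta0Rel

/-- `f` has a graph that is Δ₀ relative to a witness `z`: `D x y z` forces `y = f x`, and
`D x (f x) z` holds for all large `z`, so that one `z` can witness several values at once. -/
def HasDelta0Graph (f : ℕ → ℕ) : Prop :=
  ∃ D : ℕ → ℕ → ℕ → Prop, IsDelta0Rel (fun ρ => D (ρ 0) (ρ 1) (ρ 2)) ∧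
    (∀ x y z, D x y z → f x = y) ∧ ∀ x, ∀ᶠ z in Filter.atTop, D x (f x) z

theorem IsDelta0Rel.apply₃ {D : ℕ → ℕ → ℕ → Prop} {f g h : (ℕ → ℕ) → ℕ}
    (hD : IsDelta0Rel fun ρ => D (ρ 0) (ρ 1) (ρ 2)) (hf : IsTermFun f) (hg : IsTermFun g)
    (hh : IsTermFun h) : IsDelta0Rel fun ρ => D (f ρ) (g ρ) (h ρ) := by
  obtain ⟨φ, hφ, hφD⟩ := hD
  obtain ⟨t, ht⟩ := hf
  obtain ⟨s, hs⟩ := hg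
  obtain ⟨u, hu⟩ := hh
  refine ⟨φ.subst3 t s u, hφ.substAll _, fun ρ => ?_⟩
  simp only [AFml.subst3, AFml.sat_substAll, hφD, subst3Env, ht, hs, hu]

theorem exists_beta_eq (s : ℕ → ℕ) (k : ℕ) : ∃ c, ∀ i ≤ k, Nat.beta c i = s i := by
  refine ⟨Nat.unbeta ((List.range (k + 1)).map s), fun i hi => ?_⟩
  have h := Nat.beta_unbeta_coe ((List.range (k + 1)).map s) ⟨i, by simpa using by omega⟩
  simpa using h

namespace HasDelta0Graph

open Filter

variable {f g : ℕ → ℕ}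

theorem of_isDelta0Rel (h : IsDelta0Rel fun ρ => f (ρ 0) = ρ 1) : HasDelta0Graph f :=
  ⟨fun x y _ => f x = y, h, fun _ _ _ => id, fun _ => .of_forall fun _ => rfl⟩

theorem zero : HasDelta0Graph fun _ => 0 := of_isDelta0Rel (.eq (.const 0) (.var 1))

theorem succ : HasDelta0Graph Nat.succ :=
  of_isDelta0Rel (.eq ((IsTermFun.var 0).add (.const 1)) (.var 1))

theorem left : HasDelta0Graph fun n => n.unpair.1 := by
  refine of_isDelta0Rel ((IsDelta0Rel.exists_le (R := fun b ρ => ρ 0 = Nat.pair (ρ 1) b)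
    (.var 0) (.eq_pair (.var 2) (.var 0) (.var 1))).of_iff fun ρ => ?_)
  refine ⟨fun h => ⟨(ρ 0).unpair.2, Nat.unpair_right_le _, by rw [← h, Nat.pair_unpair]⟩, ?_⟩
  rintro ⟨b, -, hb⟩
  rw [hb, Nat.unpair_pair]

theorem right : HasDelta0Graph fun n => n.unpair.2 := by
  refine of_isDelta0Rel ((IsDelta0Rel.exists_le (R := fun a ρ => ρ 0 = Nat.pair a (ρ 1))
    (.var 0) (.eq_pair (.var 0) (.var 2) (.var 1))).of_iff fun ρ => ?_)
  refine ⟨fun h => ⟨(ρ 0).unpair.1, Nat.unpair_left_le _, by rw [← h, Nat.pair_unpair]⟩, ?_⟩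
  rintro ⟨a, -, ha⟩
  rw [ha, Nat.unpair_pair]

theorem pair (hf : HasDelta0Graph f) (hg : HasDelta0Graph g) :
    HasDelta0Graph fun x => Nat.pair (f x) (g x) := by
  obtain ⟨D, hD, hDf, hfD⟩ := hf
  obtain ⟨E, hE, hEg, hgE⟩ := hg
  refine ⟨fun x y z => ∃ a ≤ z, ∃ b ≤ z, D x a z ∧ E x b z ∧ y = Nat.pair a b, ?_, ?_, ?_⟩
  · exact .exists_le (.var 2) <| .exists_le (.var 3) <|
      (hD.apply₃ (.var 2) (.var 1) (.var 4)).and <|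
      (hE.apply₃ (.var 2) (.var 0) (.var 4)).and <| .eq_pair (.var 1) (.var 0) (.var 3)
  · rintro x y z ⟨a, -, b, -, ha, hb, rfl⟩
    exact congrArg₂ Nat.pair (hDf x a z ha) (hEg x b z hb)
  · intro x
    filter_upwards [hfD x, hgE x, eventually_ge_atTop (f x), eventually_ge_atTop (g x)]
      with z hf hg hfz hgz
    exact ⟨f x, hfz, g x, hgz, hf, hg, rfl⟩

theorem comp (hf : HasDelta0Graph f) (hg : HasDelta0Graph g) :
    HasDelta0Graph fun x => f (g x) := by
  obtain ⟨D, hD, hDf, hfD⟩ := hf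
  obtain ⟨E, hE, hEg, hgE⟩ := hg
  refine ⟨fun x y z => ∃ a ≤ z, E x a z ∧ D a y z, ?_, ?_, ?_⟩
  · exact .exists_le (.var 2) <|
      (hE.apply₃ (.var 1) (.var 0) (.var 3)).and (hD.apply₃ (.var 0) (.var 2) (.var 3))
  · rintro x y z ⟨a, -, ha, hy⟩
    exact (congrArg f (hEg x a z ha)).trans (hDf a y z hy)
  · intro x
    filter_upwards [hgE x, hfD (g x), eventually_ge_atTop (g x)] with z hg hf hz
    exact ⟨g x, hz, hg, hf⟩

theorem iterate (hf : HasDelta0Graph f) :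
    HasDelta0Graph fun x => f^[x.unpair.2] x.unpair.1 := by
  obtain ⟨D, hD, hDf, hfD⟩ := hf
  refine ⟨fun x y z => ∃ a ≤ z, ∃ k ≤ z, x = Nat.pair a k ∧ ∃ c ≤ z, a = Nat.beta c 0 ∧
    y = Nat.beta c k ∧ ∀ i < k, ∃ u ≤ z, ∃ v ≤ z, u = Nat.beta c i ∧ v = Nat.beta c (i + 1) ∧
      D u v z, ?_, ?_, fun x => ?_⟩
  · refine .exists_le (.var 2) <| .exists_le (.var 3) <|
      (IsDelta0Rel.eq_pair (.var 1) (.var 0) (.var 2)).and <| .exists_le (.var 4) <|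
      (IsDelta0Rel.eq_beta (.var 0) (.const 0) (.var 2)).and <|
      (IsDelta0Rel.eq_beta (.var 0) (.var 1) (.var 4)).and <| .forall_lt (.var 1) <|
      .exists_le (.var 6) <| .exists_le (.var 7) <|
      (IsDelta0Rel.eq_beta (.var 3) (.var 2) (.var 1)).and <|
      (IsDelta0Rel.eq_beta (.var 3) ((IsTermFun.var 2).add (.const 1)) (.var 0)).and <|
      hD.apply₃ (.var 1) (.var 0) (.var 8)
  · rintro x y z ⟨a, -, k, -, rfl, c, -, ha, rfl, hstep⟩
    have beta_eq : ∀ i ≤ k, Nat.beta c i = f^[i] a := by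
      intro i
      induction i with
      | zero => exact fun _ => ha.symm
      | succ i ih =>
        intro hi
        obtain ⟨u, -, v, -, rfl, rfl, huv⟩ := hstep i hi
        rw [Function.iterate_succ_apply', ← ih (Nat.le_of_lt hi), hDf _ _ z huv]
    simpa using (beta_eq k le_rfl).symm
  · obtain ⟨c, hc⟩ := exists_beta_eq (fun i => f^[i] x.unpair.1) x.unpair.2
    have values_le : ∀ᶠ z in atTop, ∀ i ∈ Set.Iic x.unpair.2, f^[i] x.unpair.1 ≤ z :=
      (Set.finite_Iic _).eventually_all.2 fun i _ => eventually_ge_atTop _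
    have steps : ∀ᶠ z in atTop, ∀ i ∈ Set.Iic x.unpair.2,
        D (f^[i] x.unpair.1) (f^[i + 1] x.unpair.1) z :=
      (Set.finite_Iic _).eventually_all.2 fun i _ => f.iterate_succ_apply' i _ ▸ hfD _
    filter_upwards [values_le, steps, eventually_ge_atTop x, eventually_ge_atTop c]
      with z hval hD hx hcz
    exact ⟨_, x.unpair_left_le.trans hx, _, x.unpair_right_le.trans hx, x.pair_unpair.symm,
      c, hcz, (hc 0 (Nat.zero_le _)).symm, (hc _ le_rfl).symm, fun i hi =>
        ⟨_, hval i hi.le, _, hval (i + 1) hi, (hc i hi.le).symm, (hc (i + 1) hi).symm, hD i hi.le⟩⟩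

theorem prec (hf : HasDelta0Graph f) (hg : HasDelta0Graph g) :
    HasDelta0Graph (Nat.unpaired fun a n =>
      n.rec (f a) fun i u => g (Nat.pair a (Nat.pair i u))) := by
  let step (p : ℕ) := Nat.pair p.unpair.1 (Nat.pair (p.unpair.2.unpair.1 + 1) (g p))
  let init (x : ℕ) := Nat.pair x.unpair.1 (Nat.pair 0 (f x.unpair.1))
  have iterate_step (a n : ℕ) : step^[n] (Nat.pair a (Nat.pair 0 (f a))) =
      Nat.pair a (Nat.pair n (n.rec (f a) fun i u => g (Nat.pair a (Nat.pair i u)))) := by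
    induction n with
    | zero => rfl
    | succ n ih => simp [Function.iterate_succ_apply', ih, step]
  have hstep : HasDelta0Graph step := left.pair ((succ.comp (left.comp right)).pair hg)
  have hinit : HasDelta0Graph init := left.pair (zero.pair (hf.comp left))
  convert right.comp (right.comp (hstep.iterate.comp (hinit.pair right))) using 2 with x
  simp [init, iterate_step, Nat.unpaired]

theorem of_primrec (hf : Nat.Primrec f) : HasDelta0Graph f := by
  induction hf with
  | zero => exact zero
  | succ => exact succ
  | left => exact left
  | right => exact right
  | pair _ _ hf hg => exact hf.pair hg
  | comp _ _ hf hg => exact hf.comp hg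
  | prec _ _ hf hg => exact hf.prec hg

end HasDelta0Graph

/-! ### Gödel numbers of substitution instances -/

theorem primrec_code_numeral : Primrec fun k => (numeral k).code :=
  (Primrec.nat_rec' .id (.const (Nat.pair 1 0))
    (Primrec₂.natPair.comp (.const 2) (.comp .snd .snd)).to₂).of_eq fun k => by
      induction k with
      | zero => rfl
      | succ k ih => exact congrArg (Nat.pair 2) ih

theorem ATerm.primrec_code_substAll {σ : ℕ → ℕ → ATerm}
    (hσ : ∀ i, Primrec fun k => (σ k i).code) (t : ATerm) :
    Primrec fun k => (t.substAll (σ k)).code := by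
  induction t with
  | var i => exact hσ i
  | zero => exact .const _
  | succ t ih => exact Primrec₂.natPair.comp (.const 2) ih
  | add t s iht ihs => exact Primrec₂.natPair.comp (.const 3) (Primrec₂.natPair.comp iht ihs)
  | mul t s iht ihs => exact Primrec₂.natPair.comp (.const 4) (Primrec₂.natPair.comp iht ihs)

theorem AFml.primrec_code_substAll {σ : ℕ → ℕ → ATerm} (φ : AFml)
    (hσ : ∀ m i, Primrec fun k => ((ATerm.lift 0)^[m] (σ k i)).code) :
    Primrec fun k => (φ.substAll (σ k)).code := by
  have hliftSub : ∀ {σ : ℕ → ℕ → ATerm},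
      (∀ m i, Primrec fun k => ((ATerm.lift 0)^[m] (σ k i)).code) →
      ∀ m i, Primrec fun k => ((ATerm.lift 0)^[m] (liftSub (σ k) i)).code
    | _, _, m, 0 => .const ((ATerm.lift 0)^[m] (.var 0)).code
    | _, hσ, m, i + 1 => hσ (m + 1) i
  induction φ generalizing σ with
  | eq t s =>
    exact Primrec₂.natPair.comp (.const 0) (Primrec₂.natPair.comp
      (t.primrec_code_substAll (hσ 0)) (s.primrec_code_substAll (hσ 0)))
  | le t s =>
    exact Primrec₂.natPair.comp (.const 1) (Primrec₂.natPair.comp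
      (t.primrec_code_substAll (hσ 0)) (s.primrec_code_substAll (hσ 0)))
  | neg φ ih => exact Primrec₂.natPair.comp (.const 2) (ih hσ)
  | and φ ψ ihφ ihψ =>
    exact Primrec₂.natPair.comp (.const 3) (Primrec₂.natPair.comp (ihφ hσ) (ihψ hσ))
  | or φ ψ ihφ ihψ =>
    exact Primrec₂.natPair.comp (.const 4) (Primrec₂.natPair.comp (ihφ hσ) (ihψ hσ))
  | imp φ ψ ihφ ihψ =>
    exact Primrec₂.natPair.comp (.const 5) (Primrec₂.natPair.comp (ihφ hσ) (ihψ hσ))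
  | all φ ih => exact Primrec₂.natPair.comp (.const 6) (ih (hliftSub hσ))
  | ex φ ih => exact Primrec₂.natPair.comp (.const 7) (ih (hliftSub hσ))

theorem AFml.primrec_code_subst0_numeral (φ : AFml) :
    Primrec fun k => (φ.subst0 (numeral k)).code :=
  φ.primrec_code_substAll fun
    | m, 0 => primrec_code_numeral.of_eq fun k => by
      rw [subst0Env_zero, Function.iterate_fixed (numeral_lift k 0)]
    | m, i + 1 => .const ((ATerm.lift 0)^[m] (.var i)).code

theorem code_iterPred (P φ : AFml) (k : ℕ) :
    (iterPred P k φ).code = (fun c => (P.subst0 (numeral c)).code)^[k] φ.code := by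
  induction k with
  | zero => rfl
  | succ k ih => rw [Function.iterate_succ_apply', ← ih, iterPred, AFml.appNum, gnum]

theorem iterPred_freeLt {P φ : AFml} (hP : P.FreeLt 1) (hφ : φ.FreeLt 0) :
    ∀ k, (iterPred P k φ).FreeLt 0
  | 0 => hφ
  | _ + 1 => hP.subst0_numeral _

/-! ### Derived rules -/

theorem AFml.evalProp_iffF {v : AFml → Prop} {φ ψ : AFml} :
    (iffF φ ψ).evalProp v ↔ (φ.evalProp v ↔ ψ.evalProp v) :=
  iff_iff_implies_and_implies.symm

namespace Proves

variable {Γ Δ : Set AFml} {φ ψ χ θ : AFml} {r s t s' t' : ATerm}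

theorem mono (h : Proves Γ φ) (hΓ : Γ ⊆ Δ) : Proves Δ φ := by
  induction h with
  | ax h => exact .ax (hΓ h)
  | taut h => exact .taut h
  | mp _ _ ih₁ ih₂ => exact ih₁.mp ih₂
  | allE φ t => exact .allE φ t
  | exI φ t => exact .exI φ t
  | allImp φ ψ => exact .allImp φ ψ
  | vacAll φ => exact .vacAll φ
  | exDef φ => exact .exDef φ
  | gen _ ih => exact ih.gen
  | eqRefl t => exact .eqRefl t
  | eqSubst φ t s => exact .eqSubst φ t s

theorem tc₁ (h₁ : Proves Γ φ) (h : ∀ v, φ.evalProp v → ψ.evalProp v) : Proves Γ ψ :=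
  (taut (φ := .imp φ ψ) h).mp h₁

theorem tc₂ (h₁ : Proves Γ φ) (h₂ : Proves Γ ψ)
    (h : ∀ v, φ.evalProp v → ψ.evalProp v → χ.evalProp v) : Proves Γ χ :=
  ((taut (φ := .imp φ (.imp ψ χ)) h).mp h₁).mp h₂

theorem tc₃ (h₁ : Proves Γ φ) (h₂ : Proves Γ ψ) (h₃ : Proves Γ χ)
    (h : ∀ v, φ.evalProp v → ψ.evalProp v → χ.evalProp v → θ.evalProp v) : Proves Γ θ :=
  (((taut (φ := .imp φ (.imp ψ (.imp χ θ))) h).mp h₁).mp h₂).mp h₃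

theorem imp_intro (h : Proves Γ ψ) : Proves Γ (.imp φ ψ) := h.tc₁ fun _ h _ => h

theorem imp_trans (h₁ : Proves Γ (.imp φ ψ)) (h₂ : Proves Γ (.imp ψ χ)) : Proves Γ (.imp φ χ) :=
  h₁.tc₂ h₂ fun _ h₁ h₂ h => h₂ (h₁ h)

theorem contrapose (h : Proves Γ (.imp φ ψ)) : Proves Γ (.imp (.neg ψ) (.neg φ)) :=
  h.tc₁ fun _ => mt

theorem iff_intro (h₁ : Proves Γ (.imp φ ψ)) (h₂ : Proves Γ (.imp ψ φ)) : Proves Γ (iffF φ ψ) :=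
  h₁.tc₂ h₂ fun _ => And.intro

theorem iff_mp (h : Proves Γ (iffF φ ψ)) : Proves Γ (.imp φ ψ) := h.tc₁ fun _ => And.left

theorem iff_mpr (h : Proves Γ (iffF φ ψ)) : Proves Γ (.imp ψ φ) := h.tc₁ fun _ => And.right

theorem iff_symm (h : Proves Γ (iffF φ ψ)) : Proves Γ (iffF ψ φ) := h.iff_mpr.iff_intro h.iff_mp

theorem iff_trans (h₁ : Proves Γ (iffF φ ψ)) (h₂ : Proves Γ (iffF ψ χ)) : Proves Γ (iffF φ χ) :=
  (h₁.iff_mp.imp_trans h₂.iff_mp).iff_intro (h₂.iff_mpr.imp_trans h₁.iff_mpr)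

theorem neg_congr (h : Proves Γ (iffF φ ψ)) : Proves Γ (iffF (.neg φ) (.neg ψ)) :=
  h.iff_mpr.contrapose.iff_intro h.iff_mp.contrapose

theorem and_congr_left (h : Proves Γ (iffF φ ψ)) : Proves Γ (iffF (.and φ χ) (.and ψ χ)) :=
  h.tc₁ fun _ h => ⟨And.imp_left h.1, And.imp_left h.2⟩

theorem or_congr (h₁ : Proves Γ (iffF φ ψ)) (h₂ : Proves Γ (iffF χ θ)) :
    Proves Γ (iffF (.or φ χ) (.or ψ θ)) :=
  h₁.tc₂ h₂ fun _ h₁ h₂ => ⟨Or.imp h₁.1 h₂.1, Or.imp h₁.2 h₂.2⟩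

theorem imp_congr_left (h : Proves Γ (iffF φ ψ)) : Proves Γ (iffF (.imp φ χ) (.imp ψ χ)) :=
  h.tc₁ fun _ h => ⟨fun h' hψ => h' (h.2 hψ), fun h' hφ => h' (h.1 hφ)⟩

theorem spec (h : Proves Γ (.all φ)) (t : ATerm) : Proves Γ (φ.subst0 t) := (allE φ t).mp h

theorem all_mono (h : Proves Γ (.imp φ ψ)) : Proves Γ (.imp (.all φ) (.all ψ)) :=
  (allImp φ ψ).mp h.gen

theorem all_congr (h : Proves Γ (iffF φ ψ)) : Proves Γ (iffF (.all φ) (.all ψ)) :=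
  h.iff_mp.all_mono.iff_intro h.iff_mpr.all_mono

theorem ex_imp_of_imp_lift (h : Proves Γ (.imp φ (ψ.lift 0))) : Proves Γ (.imp (.ex φ) ψ) := by
  have all_not : Proves Γ (.imp (.neg ψ) (.all (.neg φ))) :=
    (vacAll (.neg ψ)).imp_trans (all_mono h.contrapose)
  refine (exDef φ).tc₂ all_not fun v => ?_
  simp only [AFml.evalProp_iffF, AFml.evalProp]
  tauto

theorem not_ex (h : Proves Γ (.neg φ)) : Proves Γ (.neg (.ex φ)) :=
  (exDef φ).tc₂ h.gen fun _ hex hall => fun h => hex.1 h hall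

theorem ex_congr (h : Proves Γ (iffF φ ψ)) : Proves Γ (iffF (.ex φ) (.ex ψ)) :=
  ((exDef φ).iff_trans h.neg_congr.all_congr.neg_congr).iff_trans (exDef ψ).iff_symm

theorem eq_comm (t s : ATerm) : Proves Γ (iffF (.eq t s) (.eq s t)) := by
  have symm (t s : ATerm) : Proves Γ (.imp (.eq t s) (.eq s t)) := by
    have h := eqSubst (Γ := Γ) (.eq (.var 0) (t.lift 0)) t s
    simp only [AFml.subst0, AFml.substAll, ATerm.substAll, ATerm.lift_substAll_subst0Env,
      subst0Env_zero] at h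
    exact h.tc₂ (eqRefl t) fun _ h hrefl heq => h heq hrefl
  exact (symm t s).iff_intro (symm s t)

theorem eq_symm (h : Proves Γ (.eq t s)) : Proves Γ (.eq s t) := (eq_comm t s).iff_mp.mp h

theorem subst0_iff (φ : AFml) (h : Proves Γ (.eq t s)) :
    Proves Γ (iffF (φ.subst0 t) (φ.subst0 s)) :=
  ((eqSubst φ t s).mp h).iff_intro ((eqSubst φ s t).mp h.eq_symm)

theorem eq_trans (h₁ : Proves Γ (.eq r s)) (h₂ : Proves Γ (.eq s t)) : Proves Γ (.eq r t) := by
  have h := subst0_iff (.eq (r.lift 0) (.var 0)) h₂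
  simp only [AFml.subst0, AFml.substAll, ATerm.substAll, ATerm.lift_substAll_subst0Env,
    subst0Env_zero] at h
  exact h.iff_mp.mp h₁

theorem term_congr (r : ATerm) (h : Proves Γ (.eq t s)) :
    Proves Γ (.eq (r.substAll (subst0Env t)) (r.substAll (subst0Env s))) := by
  have h' := subst0_iff (.eq r ((r.substAll (subst0Env s)).lift 0)) h
  simp only [AFml.subst0, AFml.substAll, ATerm.lift_substAll_subst0Env] at h'
  exact h'.iff_mpr.mp (eqRefl _)

theorem succ_congr (h : Proves Γ (.eq t s)) : Proves Γ (.eq (.succ t) (.succ s)) :=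
  term_congr (.succ (.var 0)) h

theorem add_congr (ht : Proves Γ (.eq t t')) (hs : Proves Γ (.eq s s')) :
    Proves Γ (.eq (.add t s) (.add t' s')) := by
  have h₁ := term_congr (.add (.var 0) (s.lift 0)) ht
  have h₂ := term_congr (.add (t'.lift 0) (.var 0)) hs
  simp only [ATerm.substAll, ATerm.lift_substAll_subst0Env, subst0Env_zero] at h₁ h₂
  exact h₁.eq_trans h₂

theorem mul_congr (ht : Proves Γ (.eq t t')) (hs : Proves Γ (.eq s s')) :
    Proves Γ (.eq (.mul t s) (.mul t' s')) := by
  have h₁ := term_congr (.mul (.var 0) (s.lift 0)) ht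
  have h₂ := term_congr (.mul (t'.lift 0) (.var 0)) hs
  simp only [ATerm.substAll, ATerm.lift_substAll_subst0Env, subst0Env_zero] at h₁ h₂
  exact h₁.eq_trans h₂

theorem le_congr (ht : Proves Γ (.eq t t')) (hs : Proves Γ (.eq s s')) :
    Proves Γ (iffF (.le t s) (.le t' s')) := by
  have h₁ := subst0_iff (.le (.var 0) (s.lift 0)) ht
  have h₂ := subst0_iff (.le (t'.lift 0) (.var 0)) hs
  simp only [AFml.subst0, AFml.substAll, ATerm.substAll, ATerm.lift_substAll_subst0Env,
    subst0Env_zero] at h₁ h₂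
  exact h₁.iff_trans h₂

theorem eq_congr (ht : Proves Γ (.eq t t')) (hs : Proves Γ (.eq s s')) :
    Proves Γ (iffF (.eq t s) (.eq t' s')) := by
  have h₁ := subst0_iff (.eq (.var 0) (s.lift 0)) ht
  have h₂ := subst0_iff (.eq (t'.lift 0) (.var 0)) hs
  simp only [AFml.subst0, AFml.substAll, ATerm.substAll, ATerm.lift_substAll_subst0Env,
    subst0Env_zero] at h₁ h₂
  exact h₁.iff_trans h₂

theorem ex_eq_and_iff (t : ATerm) (φ : AFml) :
    Proves Γ (iffF (.ex (.and (.eq (.var 0) (t.lift 0)) φ)) (φ.subst0 t)) := by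
  refine iff_intro (ex_imp_of_imp_lift ?_) ?_
  · have h := eqSubst (Γ := Γ) (φ.lift 1) (.var 0) (t.lift 0)
    rw [AFml.lift_one_subst0_var_zero, AFml.lift_one_subst0_lift] at h
    exact h.tc₁ fun _ h' ⟨heq, hφ⟩ => h' heq hφ
  · have h := exI (Γ := Γ) (.and (.eq (.var 0) (t.lift 0)) φ) t
    simp only [AFml.subst0, AFml.substAll, ATerm.substAll, ATerm.lift_substAll_subst0Env,
      subst0Env_zero] at h
    exact h.tc₂ (eqRefl t) fun _ h' hrefl hφ => h' ⟨hrefl, hφ⟩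

end Proves

/-! ### Arithmetic of numerals in PA -/

theorem PAax.proves {φ : AFml} (h : PAax φ) : Proves PA φ := .ax h

namespace PA

open Proves

variable (t s : ATerm) {φ : AFml}

theorem succ_ne_zero : Proves PA (.neg (.eq (.succ t) .zero)) :=
  PAax.succNeZero.proves.spec t

theorem succ_inj_iff : Proves PA (iffF (.eq (.succ t) (.succ s)) (.eq t s)) := by
  have inj := (PAax.succInj.proves.spec t).spec s
  have congr := eqSubst (Γ := PA) (.eq (.succ (t.lift 0)) (.succ (.var 0))) t s
  simp only [AFml.subst0, AFml.substAll, ATerm.substAll, ATerm.lift_substAll_subst0Env,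
    subst0Env_zero, liftSub_zero, liftSub_succ] at inj congr
  exact iff_intro inj (congr.tc₂ (eqRefl (.succ t)) fun _ h hrefl heq => h heq hrefl)

theorem add_zero : Proves PA (.eq (.add t .zero) t) := PAax.addZero.proves.spec t

theorem mul_zero : Proves PA (.eq (.mul t .zero) .zero) := PAax.mulZero.proves.spec t

theorem add_succ : Proves PA (.eq (.add t (.succ s)) (.succ (.add t s))) := by
  simpa [AFml.subst0] using (PAax.addSucc.proves.spec t).spec s

theorem mul_succ : Proves PA (.eq (.mul t (.succ s)) (.add (.mul t s) t)) := by
  simpa [AFml.subst0] using (PAax.mulSucc.proves.spec t).spec s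

theorem le_iff :
    Proves PA (iffF (.le t s) (.ex (.eq (.add (.var 0) (t.lift 0)) (s.lift 0)))) := by
  have h := (PAax.leDef.proves.spec t).spec s
  simpa [AFml.subst0, iffF] using h

theorem zero_le : Proves PA (.le .zero t) := by
  refine (le_iff .zero t).iff_mpr.mp ((exI _ t).mp ?_)
  simpa [AFml.subst0] using add_zero t

theorem not_succ_le_zero : Proves PA (.neg (.le (.succ t) .zero)) := by
  have add_succ_ne_zero :
      Proves PA (.neg (.eq (.add (.var 0) (.succ (t.lift 0))) .zero)) :=
    (eq_congr (add_succ _ _) (eqRefl _)).tc₂ (succ_ne_zero (.add (.var 0) (t.lift 0)))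
      fun _ h hne heq => hne (h.1 heq)
  exact (le_iff (.succ t) .zero).tc₂ add_succ_ne_zero.not_ex fun _ h hne hle => hne (h.1 hle)

theorem succ_le_succ_iff : Proves PA (iffF (.le (.succ t) (.succ s)) (.le t s)) := by
  have h : Proves PA (iffF (.eq (.add (.var 0) (.succ (t.lift 0))) (.succ (s.lift 0)))
      (.eq (.add (.var 0) (t.lift 0)) (s.lift 0))) :=
    (eq_congr (add_succ _ _) (eqRefl _)).iff_trans (succ_inj_iff _ _)
  exact ((le_iff (.succ t) (.succ s)).iff_trans h.ex_congr).iff_trans (le_iff t s).iff_symm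

theorem numeral_add (m : ℕ) :
    ∀ n, Proves PA (.eq (.add (numeral m) (numeral n)) (numeral (m + n)))
  | 0 => add_zero _
  | n + 1 => (add_succ _ _).eq_trans (numeral_add m n).succ_congr

theorem numeral_mul (m : ℕ) :
    ∀ n, Proves PA (.eq (.mul (numeral m) (numeral n)) (numeral (m * n)))
  | 0 => mul_zero _
  | n + 1 => ((mul_succ _ _).eq_trans ((numeral_mul m n).add_congr (eqRefl _))).eq_trans
      (numeral_add (m * n) m)

theorem eq_numeral_val (ρ : ℕ → ℕ) :
    ∀ t : ATerm, Proves PA (.eq (t.substAll fun i => numeral (ρ i)) (numeral (t.val ρ)))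
  | .var _ => eqRefl _
  | .zero => eqRefl _
  | .succ t => (eq_numeral_val ρ t).succ_congr
  | .add t s => ((eq_numeral_val ρ t).add_congr (eq_numeral_val ρ s)).eq_trans (numeral_add _ _)
  | .mul t s => ((eq_numeral_val ρ t).mul_congr (eq_numeral_val ρ s)).eq_trans (numeral_mul _ _)

theorem all_of_zero_of_succ (h₀ : Proves PA (φ.subst0 .zero))
    (hs : Proves PA (.all (succSubst φ))) : Proves PA (.all φ) := by
  have step : Proves PA (.all (.imp φ (succSubst φ))) :=
    (all_mono (taut (φ := .imp (succSubst φ) (.imp φ (succSubst φ))) fun _ h _ => h)).mp hs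
  exact (PAax.ind φ).proves.tc₃ h₀ step fun _ h h₀ step => h ⟨h₀, step⟩

theorem all_le_numeral_imp (n : ℕ) (h : ∀ i ≤ n, Proves PA (φ.subst0 (numeral i))) :
    Proves PA (.all (.imp (.le (.var 0) (numeral n)) φ)) := by
  induction n generalizing φ with
  | zero =>
    refine all_of_zero_of_succ (h 0 le_rfl).imp_intro (gen ?_)
    exact (not_succ_le_zero (.var 0)).tc₁ fun _ h hle => absurd hle h
  | succ n ih =>
    refine all_of_zero_of_succ (h 0 n.succ.zero_le).imp_intro ?_
    have ih' := ih (φ := succSubst φ) fun i hi => by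
      rw [succSubst_subst0_numeral]
      exact h (i + 1) (Nat.succ_le_succ hi)
    refine (all_mono ?_).mp ih'
    simpa [succSubst, numeral] using (succ_le_succ_iff (.var 0) (numeral n)).imp_congr_left.iff_mpr

theorem le_total_numeral (n : ℕ) :
    Proves PA (.or (.le t (numeral n)) (.le (numeral n) t)) := by
  suffices h : Proves PA (.all (.or (.le (.var 0) (numeral n)) (.le (numeral n) (.var 0)))) by
    simpa [AFml.subst0] using h.spec t
  induction n with
  | zero => exact gen ((zero_le (.var 0)).tc₁ fun _ => Or.inr)
  | succ n ih =>
    refine all_of_zero_of_succ ?_ ((all_mono ?_).mp ih)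
    · exact (zero_le _).tc₁ fun _ => Or.inl
    · simpa [succSubst, numeral] using ((succ_le_succ_iff (.var 0) (numeral n)).or_congr
        (succ_le_succ_iff (numeral n) (.var 0))).iff_mpr

end PA

/-! ### PA decides Δ₀ sentences -/

/-- `Γ` proves or refutes `φ` according to whether `p` holds. -/
def Decides (Γ : Set AFml) (φ : AFml) (p : Prop) : Prop :=
  (p → Proves Γ φ) ∧ (¬ p → Proves Γ (.neg φ))

namespace Decides

variable {Γ : Set AFml} {φ ψ : AFml} {p q : Prop}

theorem of_true (h : Proves Γ φ) (hp : p) : Decides Γ φ p := ⟨fun _ => h, fun hp' => absurd hp hp'⟩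

theorem of_false (h : Proves Γ (.neg φ)) (hp : ¬ p) : Decides Γ φ p :=
  ⟨fun hp' => absurd hp' hp, fun _ => h⟩

theorem congr (hψ : Decides Γ ψ q) (h : Proves Γ (iffF φ ψ)) (hpq : p ↔ q) : Decides Γ φ p :=
  ⟨fun hp => h.iff_mpr.mp (hψ.1 (hpq.1 hp)), fun hp => h.iff_mp.contrapose.mp (hψ.2 (mt hpq.2 hp))⟩

theorem neg (hφ : Decides Γ φ p) : Decides Γ (.neg φ) (¬ p) :=
  ⟨hφ.2, fun hp => (hφ.1 (not_not.1 hp)).tc₁ fun _ => not_not_intro⟩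

theorem and (hφ : Decides Γ φ p) (hψ : Decides Γ ψ q) : Decides Γ (.and φ ψ) (p ∧ q) := by
  refine ⟨fun h => (hφ.1 h.1).tc₂ (hψ.1 h.2) fun _ => And.intro, fun h => ?_⟩
  by_cases hp : p
  · exact (hψ.2 fun hq => h ⟨hp, hq⟩).tc₁ fun _ => mt And.right
  · exact (hφ.2 hp).tc₁ fun _ => mt And.left

theorem or (hφ : Decides Γ φ p) (hψ : Decides Γ ψ q) : Decides Γ (.or φ ψ) (p ∨ q) :=
  (hφ.neg.and hψ.neg).neg.congr (.taut fun _ => iff_iff_implies_and_implies.1 or_iff_not_and_not)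
    or_iff_not_and_not

theorem imp (hφ : Decides Γ φ p) (hψ : Decides Γ ψ q) : Decides Γ (.imp φ ψ) (p → q) :=
  (hφ.neg.or hψ).congr (.taut fun _ => iff_iff_implies_and_implies.1 imp_iff_not_or)
    imp_iff_not_or

theorem eq_numeral : ∀ m n, Decides PA (.eq (numeral m) (numeral n)) (m = n)
  | 0, 0 => of_true (.eqRefl _) rfl
  | m + 1, 0 => of_false (PA.succ_ne_zero _) m.succ_ne_zero
  | 0, n + 1 => (of_false (PA.succ_ne_zero (numeral n)) n.succ_ne_zero).congr
      (.eq_comm _ _) eq_comm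
  | m + 1, n + 1 => (eq_numeral m n).congr (PA.succ_inj_iff _ _) Nat.succ_inj

theorem le_numeral : ∀ m n, Decides PA (.le (numeral m) (numeral n)) (m ≤ n)
  | 0, n => of_true (PA.zero_le _) n.zero_le
  | m + 1, 0 => of_false (PA.not_succ_le_zero _) (Nat.not_succ_le_zero m)
  | m + 1, n + 1 => (le_numeral m n).congr (PA.succ_le_succ_iff _ _) Nat.succ_le_succ_iff

theorem forall_le_numeral {n : ℕ} {p : ℕ → Prop}
    (h : ∀ i ≤ n, Decides PA (φ.subst0 (numeral i)) (p i)) :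
    Decides PA (.all (.imp (.le (.var 0) (numeral n)) φ)) (∀ i ≤ n, p i) := by
  refine ⟨fun hp => PA.all_le_numeral_imp n fun i hi => (h i hi).1 (hp i hi), fun hp => ?_⟩
  push Not at hp
  obtain ⟨i, hi, hpi⟩ := hp
  have inst := Proves.allE (Γ := PA) (.imp (.le (.var 0) (numeral n)) φ) (numeral i)
  simp only [AFml.subst0, AFml.substAll, ATerm.substAll, subst0Env_zero, numeral_substAll] at inst
  exact ((le_numeral i n).1 hi).tc₃ ((h i hi).2 hpi) inst fun _ hle hn h hall => hn (h hall hle)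

theorem forall_le {n : ℕ} {t : ATerm} {p : ℕ → Prop} (ht : Proves PA (.eq t (numeral n)))
    (h : ∀ i ≤ n, Decides PA (φ.subst0 (numeral i)) (p i)) :
    Decides PA (.all (.imp (.le (.var 0) (t.lift 0)) φ)) (∀ i ≤ n, p i) := by
  have subst (s : ATerm) : (AFml.all (.imp (.le (.var 0) (.var 1)) (φ.lift 1))).subst0 s =
      .all (.imp (.le (.var 0) (s.lift 0)) φ) := by
    simp only [AFml.subst0, AFml.substAll, ATerm.substAll, liftSub_zero, liftSub_succ,
      subst0Env_zero, AFml.lift_one_substAll_liftSub_subst0Env]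
  have iff := ht.subst0_iff (.all (.imp (.le (.var 0) (.var 1)) (φ.lift 1)))
  rw [subst, subst, numeral_lift] at iff
  exact (forall_le_numeral h).congr iff Iff.rfl

theorem exists_le {n : ℕ} {t : ATerm} {p : ℕ → Prop} (ht : Proves PA (.eq t (numeral n)))
    (h : ∀ i ≤ n, Decides PA (φ.subst0 (numeral i)) (p i)) :
    Decides PA (.ex (.and (.le (.var 0) (t.lift 0)) φ)) (∃ i ≤ n, p i) := by
  refine (forall_le (φ := .neg φ) ht fun i hi => (h i hi).neg).neg.congr ?_ (by push Not; rfl)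
  have not_and_iff : Proves PA (iffF (.neg (.and (.le (.var 0) (t.lift 0)) φ))
      (.imp (.le (.var 0) (t.lift 0)) (.neg φ))) :=
    .taut fun _ => iff_iff_implies_and_implies.1 not_and
  exact (Proves.exDef _).iff_trans not_and_iff.all_congr.neg_congr

end Decides

theorem AFml.decides_of_isDelta0 {φ : AFml} (h : IsDelta0 φ) (ρ : ℕ → ℕ) :
    Decides PA (φ.substAll fun i => numeral (ρ i)) (φ.Sat ρ) := by
  induction h generalizing ρ with
  | eq t s =>
    exact (Decides.eq_numeral _ _).congr
      ((PA.eq_numeral_val ρ t).eq_congr (PA.eq_numeral_val ρ s)) Iff.rfl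
  | le t s =>
    exact (Decides.le_numeral _ _).congr
      ((PA.eq_numeral_val ρ t).le_congr (PA.eq_numeral_val ρ s)) Iff.rfl
  | neg _ ih => exact (ih ρ).neg
  | and _ _ ihφ ihψ => exact (ihφ ρ).and (ihψ ρ)
  | or _ _ ihφ ihψ => exact (ihφ ρ).or (ihψ ρ)
  | imp _ _ ihφ ihψ => exact (ihφ ρ).imp (ihψ ρ)
  | @ball φ t _ ih =>
    have h := Decides.forall_le (φ := φ.substAll (liftSub fun i => numeral (ρ i)))
      (PA.eq_numeral_val ρ t) fun i _ => subst0_substAll_liftSub_numeral φ ρ i ▸ ih (consEnv i ρ)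
    simpa [Sat, ATerm.val] using h
  | @bex φ t _ ih =>
    have h := Decides.exists_le (φ := φ.substAll (liftSub fun i => numeral (ρ i)))
      (PA.eq_numeral_val ρ t) fun i _ => subst0_substAll_liftSub_numeral φ ρ i ▸ ih (consEnv i ρ)
    simpa [Sat, ATerm.val] using h

/-! ### Representability of primitive recursive functions -/

/-- `χ`, with value variable `0` and argument variable `1`, represents `f` in the theory `Γ`:
for each `m`, `Γ` proves that `χ(y, m)` holds exactly for `y = f m`. -/
def Represents (Γ : Set AFml) (χ : AFml) (f : ℕ → ℕ) : Prop :=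
  ∀ m, Proves Γ (iffF (χ.subst2 (.var 0) (numeral m)) (.eq (.var 0) (numeral (f m))))

/-- `∀ w ≤ z, ∀ u ≤ w, δ(x, u, w) → u = y`: no witness up to `z` gives a value other than `y`. -/
def uniqueUpTo (δ : AFml) (x y z : ATerm) : AFml :=
  .all (.imp (.le (.var 0) (z.lift 0)) (.all (.imp (.le (.var 0) (ATerm.lift 0 (.var 0)))
    (.imp (δ.subst3 ((x.lift 0).lift 0) (.var 0) (.var 1)) (.eq (.var 0) ((y.lift 0).lift 0))))))

/-- `z` witnesses the value `y` at `x`, and no witness up to `z` gives a different value. The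
last clause makes the value provably unique even for nonstandard witnesses. -/
def graphWitness (δ : AFml) (x y z : ATerm) : AFml :=
  .and (.le y z) (.and (δ.subst3 x y z) (uniqueUpTo δ x y z))

section graphWitness

variable {δ : AFml} {x y z : ATerm}

theorem isDelta0_graphWitness (hδ : IsDelta0 δ) : IsDelta0 (graphWitness δ x y z) :=
  .and (.le _ _) <| .and (hδ.substAll _) <|
    .ball _ <| .ball _ <| .imp (hδ.substAll _) (.eq _ _)

@[simp] theorem graphWitness_substAll (δ : AFml) (x y z : ATerm) (σ : ℕ → ATerm) :
    (graphWitness δ x y z).substAll σ =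
      graphWitness δ (x.substAll σ) (y.substAll σ) (z.substAll σ) := by
  simp [graphWitness, uniqueUpTo]

theorem graphWitness_freeLt {c : ℕ} (hx : x.FreeLt c) (hy : y.FreeLt c) (hz : z.FreeLt c) :
    (graphWitness δ x y z).FreeLt c := by
  have hvar_one : 1 < c + 2 := Nat.succ_lt_succ c.succ_pos
  exact ⟨⟨hy, hz⟩, δ.freeLt_subst3 hx hy hz, ⟨c.succ_pos, hz.lift⟩, ⟨c.succ.succ_pos, hvar_one⟩,
    δ.freeLt_subst3 hx.lift.lift c.succ.succ_pos hvar_one, c.succ.succ_pos, hy.lift.lift⟩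

theorem sat_graphWitness {D : ℕ → ℕ → ℕ → Prop} (hδ : ∀ ρ, δ.Sat ρ ↔ D (ρ 0) (ρ 1) (ρ 2))
    (ρ : ℕ → ℕ) : (graphWitness δ x y z).Sat ρ ↔ y.val ρ ≤ z.val ρ ∧
      D (x.val ρ) (y.val ρ) (z.val ρ) ∧ ∀ w ≤ z.val ρ, ∀ u ≤ w, D (x.val ρ) u w → u = y.val ρ := by
  simp [graphWitness, uniqueUpTo, AFml.Sat, AFml.subst3, AFml.sat_substAll, hδ, subst3Env,
    ATerm.val]

theorem uniqueUpTo_inst {Γ : Set AFml} (δ : AFml) (x y z u w : ATerm) :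
    Proves Γ (.imp (uniqueUpTo δ x y z)
      (.imp (.le w z) (.imp (.le u w) (.imp (δ.subst3 x u w) (.eq u y))))) := by
  have inst_w := Proves.allE (Γ := Γ) (.imp (.le (.var 0) (z.lift 0))
    (.all (.imp (.le (.var 0) (ATerm.lift 0 (.var 0)))
      (.imp (δ.subst3 ((x.lift 0).lift 0) (.var 0) (.var 1))
        (.eq (.var 0) ((y.lift 0).lift 0)))))) w
  have inst_u := Proves.allE (Γ := Γ) (.imp (.le (.var 0) (w.lift 0))
    (.imp (δ.subst3 (x.lift 0) (.var 0) (w.lift 0)) (.eq (.var 0) (y.lift 0)))) u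
  simp only [ATerm.lift, lt_self_iff_false, ↓reduceIte, zero_add, AFml.subst0, AFml.substAll,
    ATerm.substAll, subst0Env_zero, ATerm.lift_substAll_subst0Env, liftSub_zero, liftSub_succ,
    AFml.subst3_substAll, ATerm.lift_substAll_liftSub] at inst_w inst_u
  exact inst_w.tc₂ inst_u fun _ h h' hall hwz => h' (h hall hwz)

theorem graphWitness_unique {Γ : Set AFml} (δ : AFml) (x y z y' z' : ATerm) :
    Proves Γ (.imp (.or (.le z z') (.le z' z))
      (.imp (graphWitness δ x y z) (.imp (graphWitness δ x y' z') (.eq y y')))) := by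
  refine (uniqueUpTo_inst δ x y' z' y z).tc₃ (uniqueUpTo_inst δ x y z y' z')
    (Proves.eq_comm y' y) fun v => ?_
  simp only [AFml.evalProp_iffF, graphWitness, AFml.evalProp]
  tauto

theorem represents_ex_graphWitness {f : ℕ → ℕ} {D : ℕ → ℕ → ℕ → Prop} (hδ : IsDelta0 δ)
    (hδD : ∀ ρ, δ.Sat ρ ↔ D (ρ 0) (ρ 1) (ρ 2)) (hDf : ∀ x y z, D x y z → f x = y)
    (hfD : ∀ x, ∀ᶠ z in Filter.atTop, D x (f x) z) :
    Represents PA (.ex (graphWitness δ (.var 2) (.var 1) (.var 0))) f := by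
  intro m
  obtain ⟨z₀, hD, hz₀⟩ := ((hfD m).and (Filter.eventually_ge_atTop (f m))).exists
  have value_witness : Proves PA (graphWitness δ (numeral m) (numeral (f m)) (numeral z₀)) := by
    have h := AFml.decides_of_isDelta0
      (isDelta0_graphWitness (x := numeral m) (y := numeral (f m)) (z := numeral z₀) hδ) fun _ => 0
    simp only [graphWitness_substAll, numeral_substAll, sat_graphWitness hδD, numeral_val] at h
    exact h.1 ⟨hz₀, hD, fun w _ u _ hu => (hDf _ _ _ hu).symm⟩
  rw [AFml.subst2, AFml.substAll, graphWitness_substAll]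
  simp only [ATerm.substAll, liftSub_zero, liftSub_succ, subst2Env, numeral_lift, ATerm.lift,
    lt_self_iff_false, ↓reduceIte, zero_add]
  refine .iff_intro (.ex_imp_of_imp_lift ?_) ?_
  · simp only [AFml.lift, ATerm.lift, lt_self_iff_false, ↓reduceIte, zero_add, numeral_lift]
    exact (graphWitness_unique δ _ _ _ _ _).tc₃ value_witness (PA.le_total_numeral (.var 0) z₀)
      fun _ h hw hle hy => h hle hy hw
  · have transfer := Proves.eqSubst (Γ := PA)
      (graphWitness δ (numeral m) (.var 0) (numeral z₀)) (numeral (f m)) (.var 0)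
    have intro_z := Proves.exI (Γ := PA)
      (graphWitness δ (numeral m) (.var 1) (.var 0)) (numeral z₀)
    simp only [AFml.subst0, graphWitness_substAll, numeral_substAll, ATerm.substAll,
      subst0Env_zero, subst0Env_succ] at transfer intro_z
    exact ((Proves.eq_comm _ _).iff_mp.imp_trans
      (transfer.tc₂ value_witness fun _ h hw heq => h heq hw)).imp_trans intro_z

end graphWitness

theorem exists_represents {f : ℕ → ℕ} (hf : Primrec f) :
    ∃ χ : AFml, χ.FreeLt 2 ∧ Represents PA χ f := by
  obtain ⟨D, ⟨δ, hδ, hδD⟩, hDf, hfD⟩ := HasDelta0Graph.of_primrec (Primrec.nat_iff.1 hf)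
  exact ⟨.ex (graphWitness δ (.var 2) (.var 1) (.var 0)),
    graphWitness_freeLt (Nat.lt_succ_self 2) (by decide : 1 < 3) (Nat.succ_pos 2),
    represents_ex_graphWitness hδ hδD hDf hfD⟩

/-! ### The diagonal lemma -/

/-- The Gödel number of `∃ y, y = c̄ ∧ θ(y)`, where `c` is the Gödel number of `θ`: the diagonal
function of the fixed point construction. -/
def diagCode (c : ℕ) : ℕ :=
  Nat.pair 7 (Nat.pair 3 (Nat.pair (Nat.pair 0 (Nat.pair (Nat.pair 0 0) (numeral c).code)) c))

theorem primrec_diagCode : Primrec diagCode :=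
  Primrec₂.natPair.comp (.const 7) <| Primrec₂.natPair.comp (.const 3) <|
    Primrec₂.natPair.comp (Primrec₂.natPair.comp (.const 0)
      (Primrec₂.natPair.comp (.const (Nat.pair 0 0)) primrec_code_numeral)) .id

theorem exists_fixedPoint {ψ : AFml} (hψ : ψ.FreeLt 1) {g : ℕ → ℕ} (hg : Primrec g) :
    ∃ σ : AFml, σ.FreeLt 0 ∧ Proves PA (iffF σ (ψ.subst0 (numeral (g σ.code)))) := by
  obtain ⟨χ, hχ, hχg⟩ := exists_represents (hg.comp primrec_diagCode)
  let θ : AFml := .ex (.and χ ψ)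
  have hθ : θ.FreeLt 1 := ⟨hχ, hψ.mono (Nat.le_succ 1)⟩
  let σ : AFml := .ex (.and (.eq (.var 0) (gnum θ)) θ)
  refine ⟨σ, ⟨⟨Nat.one_pos, numeral_freeLt _ _⟩, hθ⟩, ?_⟩
  have subst0_θ : θ.subst0 (gnum θ) = .ex (.and (χ.subst2 (.var 0) (gnum θ)) ψ) := by
    have hχ_eq : χ.substAll (liftSub (subst0Env (gnum θ))) = χ.subst2 (.var 0) (gnum θ) :=
      AFml.substAll_congr hχ fun
        | 0, _ => rfl
        | 1, _ => numeral_lift _ _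
    have hψ_eq : ψ.substAll (liftSub (subst0Env (gnum θ))) = ψ :=
      hψ.substAll_eq_self fun | 0, _ => rfl
    rw [← hχ_eq]
    conv_rhs => rw [← hψ_eq]
    rfl
  have σ_iff : Proves PA (iffF σ (θ.subst0 (gnum θ))) := by
    have h := Proves.ex_eq_and_iff (Γ := PA) (gnum θ) θ
    rwa [gnum, numeral_lift] at h
  have θ_iff : Proves PA (iffF (θ.subst0 (gnum θ)) (ψ.subst0 (numeral (g σ.code)))) := by
    have h := Proves.ex_eq_and_iff (Γ := PA) (numeral (g σ.code)) ψ
    rw [numeral_lift] at h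
    rw [subst0_θ]
    exact (Proves.ex_congr (.and_congr_left (hχg θ.code))).iff_trans h
  exact σ_iff.iff_trans θ_iff

/-! ### Reflection for iterated provability -/

/-- The arithmetical interpretation based on `P` that extends the assignment `e` of sentences to
the propositional variables. -/
def interp (P : AFml) (e : ℕ → AFml) : MFml → AFml
  | .var i => e i
  | .bot => botFml
  | .neg A => .neg (interp P e A)
  | .and A B => .and (interp P e A) (interp P e B)
  | .or A B => .or (interp P e A) (interp P e B)
  | .imp A B => .imp (interp P e A) (interp P e B)
  | .box A => P.appNum (interp P e A)

theorem isInterp_interp (P : AFml) {e : ℕ → AFml} (he : ∀ i, (e i).FreeLt 0) :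
    IsInterp P (interp P e) :=
  ⟨he, rfl, fun _ => rfl, fun _ _ => rfl, fun _ _ => rfl, fun _ _ => rfl, fun _ => rfl⟩

theorem interp_boxIter (P : AFml) (e : ℕ → AFml) (A : MFml) :
    ∀ k, interp P e (boxIter k A) = iterPred P k (interp P e A)
  | 0 => rfl
  | k + 1 => congrArg P.appNum (interp_boxIter P e A k)

theorem exists_iff_neg_iterPred {P : AFml} (hP : P.FreeLt 1) {n : ℕ} (hn : n ≠ 0) :
    ∃ σ : AFml, σ.FreeLt 0 ∧ Proves PA (iffF σ (.neg (iterPred P n σ))) := by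
  obtain ⟨k, rfl⟩ := Nat.exists_eq_succ_of_ne_zero hn
  have primrec_iterate : Primrec (fun c => (P.subst0 (numeral c)).code)^[k] :=
    .nat_iterate (.const k) .id (P.primrec_code_subst0_numeral.comp .snd).to₂
  obtain ⟨σ, hσ, hfix⟩ := exists_fixedPoint (ψ := .neg P) hP primrec_iterate
  rw [← code_iterPred] at hfix
  exact ⟨σ, hσ, hfix⟩

theorem Proves.iterPred {Tax : Set AFml} {P φ : AFml} (hP : P.FreeLt 1)
    (hnec : ∀ ψ : AFml, ψ.FreeLt 0 → Proves Tax ψ → Proves Tax (P.appNum ψ)) (hφ : φ.FreeLt 0)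
    (h : Proves Tax φ) : ∀ k, Proves Tax (iterPred P k φ)
  | 0 => h
  | k + 1 => hnec _ (iterPred_freeLt hP hφ k) (h.iterPred hP hnec hφ k)

theorem statement_2_general {Tax : Set AFml} (hext : PA ⊆ Tax) (hcons : ¬ Proves Tax botFml)
    {P : AFml} (hP : P.FreeLt 1)
    (hnec : ∀ φ : AFml, φ.FreeLt 0 → Proves Tax φ → Proves Tax (P.appNum φ))
    {n : ℕ} (hn : n ≠ 0) : .imp (boxIter n (.var 0)) (.var 0) ∉ PL Tax P := by
  intro hPL
  obtain ⟨σ, hσ, hfix⟩ := exists_iff_neg_iterPred hP hn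
  have fixed_point : Proves Tax (iffF σ (.neg (iterPred P n σ))) := hfix.mono hext
  have reflection : Proves Tax (.imp (iterPred P n σ) σ) := by
    have h := hPL _ (isInterp_interp P fun _ => hσ)
    rwa [interp, interp_boxIter] at h
  have proves_σ : Proves Tax σ :=
    fixed_point.tc₂ reflection fun _ hfix hrefl => by_contra fun hσ => hσ (hfix.2 (hσ ∘ hrefl))
  have proves_iter : Proves Tax (iterPred P n σ) := proves_σ.iterPred hP hnec hσ n
  have proves_neg_iter : Proves Tax (.neg (iterPred P n σ)) := fixed_point.iff_mp.mp proves_σ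
  exact hcons (proves_iter.tc₂ proves_neg_iter fun _ h hneg => (hneg h).elim)

/-- For each `n ≥ 1`, there exists no provability predicate `PR_T(x)` of `T`
such that `N⁺A_{0,n} ⊆ PL(PR_T)`. -/
theorem statement_2 (Tax : Set AFml) (hext : PA ⊆ Tax)
    (hcons : ¬ Proves Tax botFml) (hpr : PrAxiomatized Tax)
    (n : ℕ) (hn : 1 ≤ n) :
    ¬ ∃ P : AFml, IsProvPred Tax P ∧ {A : MFml | NAProves 0 n A} ⊆ PL Tax P := by
  rintro ⟨P, ⟨hP, hprov⟩, hPL⟩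
  exact statement_2_general hext hcons hP (fun φ _ h => ((hprov φ).1 h).mono hext)
    (Nat.one_le_iff_ne_zero.1 hn) (hPL (.acc (.var 0)))

end PLN
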